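/- Assume (σ_min + σ_min,m+1)/2 < τ < (σ_max + σ_max,m+1)/2, τ ≠ σᵢ for all 1 ≤ i ≤ N, and δ < d_{m+1} where d_{m+1} = min_{m<i≤N} |σᵢ − τ|, and let r ∈ ℝ^{M+N} satisfy Π̃_m r = r. Then for every j ∈ ℕ there exists w ∈ K_j(B̃_m, r) such that ‖B̃_m w + r‖ ≤ 2 · (1 − 2/(1 + (σ_max + τ + δ)/(d_{m+1} − δ)))^{⌊j/2⌋} · ‖r‖, where ⌊·⌋ denotes the integer part. -/

import Mathlib

open Matrix

noncomputable def vnorm {ι : Type*} [Fintype ι] (x : ι → ℝ) : ℝ :=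
  Real.sqrt (∑ i, x i ^ 2)

noncomputable def specNorm {ι κ : Type*} [Fintype ι] [Fintype κ] [DecidableEq κ]
    (A : Matrix ι κ ℝ) : ℝ :=
  ‖LinearMap.toContinuousLinearMap (Matrix.toEuclideanLin A)‖

noncomputable def Krylov {ι : Type*} [Fintype ι] [DecidableEq ι]
    (B : Matrix ι ι ℝ) (r : ι → ℝ) (j : ℕ) : Submodule ℝ (ι → ℝ) :=
  Submodule.span ℝ {x | ∃ i < j, x = (B ^ i) *ᵥ r}

set_option linter.unusedSimpArgs false

lemma aux_vnorm_eq {ι : Type*} [Fintype ι] (x : ι → ℝ) : vnorm x = ‖WithLp.toLp 2 x‖ := by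
  simp [vnorm, EuclideanSpace.norm_eq]

lemma aux_vnorm_nonneg {ι : Type*} [Fintype ι] (x : ι → ℝ) : 0 ≤ vnorm x := Real.sqrt_nonneg _

lemma aux_vnorm_sq {ι : Type*} [Fintype ι] (x : ι → ℝ) : vnorm x ^ 2 = x ⬝ᵥ x := by
  rw [vnorm, Real.sq_sqrt (Finset.sum_nonneg fun i _ => sq_nonneg _)]
  simp [dotProduct, sq]

lemma aux_vnorm_add {ι : Type*} [Fintype ι] (x y : ι → ℝ) : vnorm (x + y) ≤ vnorm x + vnorm y := by
  simp only [aux_vnorm_eq, WithLp.toLp_add]; exact norm_add_le _ _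

lemma aux_vnorm_sub {ι : Type*} [Fintype ι] (x y : ι → ℝ) : vnorm x - vnorm y ≤ vnorm (x - y) := by
  simp only [aux_vnorm_eq, WithLp.toLp_sub]; exact norm_sub_norm_le _ _

lemma aux_vnorm_smul {ι : Type*} [Fintype ι] (c : ℝ) (x : ι → ℝ) : vnorm (c • x) = |c| * vnorm x := by
  simp only [aux_vnorm_eq, WithLp.toLp_smul, norm_smul, Real.norm_eq_abs]

lemma aux_vnorm_pos {ι : Type*} [Fintype ι] (x : ι → ℝ) (hx : x ≠ 0) : 0 < vnorm x := by
  rw [aux_vnorm_eq, norm_pos_iff]; simpa using hx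

lemma aux_dot_le {ι : Type*} [Fintype ι] (x y : ι → ℝ) : x ⬝ᵥ y ≤ vnorm x * vnorm y := by
  have := real_inner_le_norm (WithLp.toLp 2 y) (WithLp.toLp 2 x)
  rw [← aux_vnorm_eq, ← aux_vnorm_eq] at this
  simp only [EuclideanSpace.inner_toLp_toLp, star_trivial] at this
  linarith [mul_comm (vnorm x) (vnorm y)]

lemma aux_mulVec_le {ι κ : Type*} [Fintype ι] [Fintype κ] [DecidableEq κ]
    (A : Matrix ι κ ℝ) (x : κ → ℝ) : vnorm (A *ᵥ x) ≤ specNorm A * vnorm x := by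
  have := (LinearMap.toContinuousLinearMap (Matrix.toEuclideanLin A)).le_opNorm (WithLp.toLp 2 x)
  rw [aux_vnorm_eq, aux_vnorm_eq]
  exact this

lemma aux_spec_nonneg {ι κ : Type*} [Fintype ι] [Fintype κ] [DecidableEq κ]
    (A : Matrix ι κ ℝ) : 0 ≤ specNorm A := norm_nonneg _

lemma aux_spec_le {ι κ : Type*} [Fintype ι] [Fintype κ] [DecidableEq κ]
    (A : Matrix ι κ ℝ) (c : ℝ) (hc : 0 ≤ c) (h : ∀ x, vnorm (A *ᵥ x) ≤ c * vnorm x) :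
    specNorm A ≤ c := by
  refine ContinuousLinearMap.opNorm_le_bound _ hc fun x => ?_
  have := h x.ofLp
  rw [aux_vnorm_eq, aux_vnorm_eq] at this
  exact this

lemma aux_spec_mul {ι κ l : Type*} [Fintype ι] [Fintype κ] [DecidableEq κ] [Fintype l] [DecidableEq l]
    (A : Matrix ι κ ℝ) (B : Matrix κ l ℝ) : specNorm (A * B) ≤ specNorm A * specNorm B := by
  refine aux_spec_le _ _ (mul_nonneg (aux_spec_nonneg _) (aux_spec_nonneg _)) fun x => ?_
  rw [← Matrix.mulVec_mulVec, mul_assoc]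
  exact (aux_mulVec_le _ _).trans (mul_le_mul_of_nonneg_left (aux_mulVec_le _ _) (aux_spec_nonneg _))

lemma aux_spec_add {ι κ : Type*} [Fintype ι] [Fintype κ] [DecidableEq κ]
    (A B : Matrix ι κ ℝ) : specNorm (A + B) ≤ specNorm A + specNorm B := by
  refine aux_spec_le _ _ (add_nonneg (aux_spec_nonneg _) (aux_spec_nonneg _)) fun x => ?_
  rw [Matrix.add_mulVec, add_mul]
  exact (aux_vnorm_add _ _).trans (add_le_add (aux_mulVec_le _ _) (aux_mulVec_le _ _))

lemma aux_spec_tr {ι κ : Type*} [Fintype ι] [Fintype κ] [DecidableEq κ] [DecidableEq ι]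
    (A : Matrix ι κ ℝ) : specNorm Aᵀ ≤ specNorm A := by
  refine aux_spec_le _ _ (aux_spec_nonneg _) fun x => ?_
  have h1 : vnorm (Aᵀ *ᵥ x) ^ 2 ≤ vnorm x * (specNorm A * vnorm (Aᵀ *ᵥ x)) := by
    rw [aux_vnorm_sq]
    have : (Aᵀ *ᵥ x) ⬝ᵥ (Aᵀ *ᵥ x) = x ⬝ᵥ (A *ᵥ (Aᵀ *ᵥ x)) := by
      rw [Matrix.dotProduct_mulVec x, Matrix.mulVec_transpose]
    rw [this]
    exact (aux_dot_le _ _).trans (mul_le_mul_of_nonneg_left (aux_mulVec_le _ _) (aux_vnorm_nonneg _))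
  rcases (aux_vnorm_nonneg (Aᵀ *ᵥ x)).eq_or_lt with h | h
  · rw [← h]; exact mul_nonneg (aux_spec_nonneg _) (aux_vnorm_nonneg _)
  · nlinarith

lemma aux_eig {n : Type*} [Fintype n] [DecidableEq n] (H : Matrix n n ℝ) (hH : Hᵀ = H) (l : ℝ)
    (hl : l ∈ spectrum ℝ H) : ∃ x : n → ℝ, x ≠ 0 ∧ H *ᵥ x = l • x := by
  have hh : H.IsHermitian := by simpa [Matrix.IsHermitian] using hH
  rw [hh.spectrum_real_eq_range_eigenvalues] at hl
  obtain ⟨i, rfl⟩ := hl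
  refine ⟨_, ?_, hh.mulVec_eigenvectorBasis i⟩
  have := hh.eigenvectorBasis.orthonormal.ne_zero i
  simpa using this

section
open scoped Matrix.Norms.L2Operator

lemma aux_spec_eq {n : Type*} [Fintype n] [DecidableEq n] (H : Matrix n n ℝ) :
   specNorm H = ‖H‖ := rfl

lemma aux_cfc_le {n : Type*} [Fintype n] [DecidableEq n] (H : Matrix n n ℝ)
    (f : ℝ → ℝ) (C : ℝ) (hC : 0 ≤ C) (hf : ∀ l ∈ spectrum ℝ H, |f l| ≤ C) :
    specNorm (cfc f H) ≤ C := by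
  rw [aux_spec_eq]
  exact norm_cfc_le hC hf
end

lemma aux_poly {n : Type*} [Fintype n] [DecidableEq n] (H : Matrix n n ℝ) (hH : Hᵀ = H)
    (q : Polynomial ℝ) (C : ℝ) (hC : 0 ≤ C)
    (hq : ∀ l : ℝ, (∃ x : n → ℝ, x ≠ 0 ∧ H *ᵥ x = l • x) → |q.eval l| ≤ C) :
    specNorm (Polynomial.aeval H q) ≤ C := by
  have hh : IsSelfAdjoint H := by
    rw [isSelfAdjoint_iff, Matrix.star_eq_conjTranspose]; simpa using hH
  rw [← cfc_polynomial q H hh]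
  exact aux_cfc_le H _ C hC fun l hl => hq l (aux_eig H hH l hl)

lemma aux_sqrt {n : Type*} [Fintype n] [DecidableEq n] (D : Matrix n n ℝ) (hD : Dᵀ = D)
    (c : ℝ) (hc0 : 0 ≤ c) (hc : c < 1)
    (hq : ∀ l : ℝ, (∃ x : n → ℝ, x ≠ 0 ∧ D *ᵥ x = l • x) → 0 ≤ l ∧ l ≤ c) :
    ∃ G F : Matrix n n ℝ, Fᵀ = F ∧ F * F * (1 - D) = 1 ∧ G * F = 1 ∧
      (∀ X, Commute D X → Commute F X) ∧ specNorm (G - 1) ≤ c := by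
  have hh : IsSelfAdjoint D := by
    rw [isSelfAdjoint_iff, Matrix.star_eq_conjTranspose]; simpa using hD
  have hsp : ∀ l ∈ spectrum ℝ D, 0 ≤ l ∧ l ≤ c := fun l hl => hq l (aux_eig D hD l hl)
  have hfin : (spectrum ℝ D).Finite := Matrix.finite_real_spectrum
  have hcont : ∀ f : ℝ → ℝ, ContinuousOn f (spectrum ℝ D) := fun f => hfin.continuousOn f
  refine ⟨cfc (fun x => Real.sqrt (1 - x)) D, cfc (fun x => (Real.sqrt (1 - x))⁻¹) D, ?_, ?_, ?_, ?_, ?_⟩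
  · have : IsSelfAdjoint (cfc (fun x : ℝ => (Real.sqrt (1 - x))⁻¹) D) := cfc_predicate _ _
    rw [isSelfAdjoint_iff, Matrix.star_eq_conjTranspose] at this
    simpa using this
  · have : (1 - D) = cfc (fun x : ℝ => 1 - x) D := by
      rw [cfc_sub (fun _ => 1) (fun x => x) D (hcont _) (hcont _), cfc_const_one ℝ D, cfc_id' ℝ D]
    rw [this, ← cfc_mul _ _ D (hcont _) (hcont _), ← cfc_mul _ _ D (hcont _) (hcont _),
      ← cfc_const_one ℝ D]
    refine cfc_congr fun x hx => ?_
    have h2 := hsp x hx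
    have h3 : 0 < 1 - x := by linarith
    have h4 := Real.sq_sqrt h3.le
    have h5 := Real.sqrt_pos.2 h3
    field_simp
    linarith
  · rw [← cfc_mul _ _ D (hcont _) (hcont _), ← cfc_const_one ℝ D]
    refine cfc_congr fun x hx => ?_
    have h2 := hsp x hx
    have h3 : 0 < 1 - x := by linarith
    have h5 := Real.sqrt_pos.2 h3
    field_simp
  · intro X hX
    exact (Commute.cfc_real hX _)
  · have : cfc (fun x => Real.sqrt (1 - x)) D - 1 = cfc (fun x => Real.sqrt (1 - x) - 1) D := by
      rw [cfc_sub _ _ D (hcont _) (hcont _), cfc_const_one ℝ D]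
    rw [this]
    refine aux_cfc_le D _ c hc0 fun x hx => ?_
    have h2 := hsp x hx
    have h3 : 0 ≤ 1 - x := by linarith
    have h4 := Real.sq_sqrt h3
    have h5 := Real.sqrt_nonneg (1 - x)
    rw [abs_le]
    constructor <;> nlinarith

lemma aux_dot_symm {n : Type*} [Fintype n] (H : Matrix n n ℝ) (hH : Hᵀ = H)
    (x y : n → ℝ) : (H *ᵥ x) ⬝ᵥ y = x ⬝ᵥ (H *ᵥ y) := by
  rw [Matrix.dotProduct_mulVec, ← Matrix.mulVec_transpose, hH]

lemma aux_iso {n k : Type*} [Fintype n] [Fintype k] [DecidableEq n] (W : Matrix k n ℝ) (hW : Wᵀ * W = 1)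
    (x : n → ℝ) : vnorm (W *ᵥ x) = vnorm x := by
  rw [← sq_eq_sq₀ (aux_vnorm_nonneg _) (aux_vnorm_nonneg _), aux_vnorm_sq, aux_vnorm_sq,
    Matrix.dotProduct_mulVec, ← Matrix.mulVec_transpose, Matrix.mulVec_mulVec, hW, Matrix.one_mulVec]

lemma aux_iso_spec {n k : Type*} [Fintype n] [Fintype k] [DecidableEq n] (W : Matrix k n ℝ) (hW : Wᵀ * W = 1) :
    specNorm W ≤ 1 :=
  aux_spec_le _ _ zero_le_one fun x => by rw [aux_iso W hW, one_mul]

/-- Pythagoras for an orthogonal projection. -/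
lemma aux_pyth {n : Type*} [Fintype n] [DecidableEq n] (P : Matrix n n ℝ) (hP : Pᵀ = P) (hPP : P * P = P)
    (x : n → ℝ) : vnorm (P *ᵥ x) ^ 2 + vnorm ((1 - P) *ᵥ x) ^ 2 = vnorm x ^ 2 := by
  have h : (P *ᵥ x) ⬝ᵥ (P *ᵥ x) = x ⬝ᵥ (P *ᵥ x) := by
    rw [aux_dot_symm P hP, Matrix.mulVec_mulVec, hPP]
  simp only [aux_vnorm_sq, Matrix.sub_mulVec, Matrix.one_mulVec, dotProduct_sub, sub_dotProduct, h]
  rw [dotProduct_comm (P *ᵥ x) x]; ring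

lemma aux_proj_spec {n : Type*} [Fintype n] [DecidableEq n] (P : Matrix n n ℝ) (hP : Pᵀ = P) (hPP : P * P = P) :
    specNorm P ≤ 1 := by
  refine aux_spec_le _ _ zero_le_one fun x => ?_
  have := aux_pyth P hP hPP x
  rw [one_mul]
  exact abs_le_of_sq_le_sq' (by nlinarith [sq_nonneg (vnorm ((1 - P) *ᵥ x))]) (aux_vnorm_nonneg _) |>.2

lemma aux_nagy {n : Type*} [Fintype n] [DecidableEq n] (P Q : Matrix n n ℝ)
    (hP : Pᵀ = P) (hPP : P * P = P) (hQ : Qᵀ = Q) (hQQ : Q * Q = Q) (s : ℝ) (hs0 : 0 ≤ s) (hs : s < 1)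
    (h1 : specNorm (P * (1 - Q)) ≤ s) (h2 : specNorm ((1 - P) * Q) ≤ s) :
    ∃ W : Matrix n n ℝ, Wᵀ * W = 1 ∧ W * Wᵀ = 1 ∧ W * Q = P * W ∧ specNorm (P * Q - W * Q) ≤ s ^ 2 := by
  have hPP' : ∀ X : Matrix n n ℝ, P * (P * X) = P * X := fun X => by rw [← mul_assoc, hPP]
  have hQQ' : ∀ X : Matrix n n ℝ, Q * (Q * X) = Q * X := fun X => by rw [← mul_assoc, hQQ]
  have hDt : ((P - Q) * (P - Q))ᵀ = (P - Q) * (P - Q) := by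
    simp [Matrix.transpose_mul, hP, hQ]
  have hPQt : (P - Q)ᵀ = P - Q := by simp [hP, hQ]
  have hb : ∀ x : n → ℝ, vnorm ((P - Q) *ᵥ x) ^ 2 ≤ s ^ 2 * vnorm x ^ 2 := by
    intro x
    have e1 := aux_pyth P hP hPP ((P - Q) *ᵥ x)
    have e2 := aux_pyth Q hQ hQQ x
    have e3 : P *ᵥ ((P - Q) *ᵥ x) = (P * (1 - Q)) *ᵥ ((1 - Q) *ᵥ x) := by
      rw [Matrix.mulVec_mulVec, Matrix.mulVec_mulVec]; congr 1
      simp only [mul_sub, sub_mul, mul_one, one_mul, hPP, hQQ, mul_assoc, hPP', hQQ']; abel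
    have e4 : (1 - P) *ᵥ ((P - Q) *ᵥ x) = -(((1 - P) * Q) *ᵥ (Q *ᵥ x)) := by
      rw [Matrix.mulVec_mulVec, Matrix.mulVec_mulVec, ← Matrix.neg_mulVec]; congr 1
      simp only [mul_sub, sub_mul, mul_one, one_mul, hPP, hQQ, mul_assoc, hPP', hQQ']; abel
    have e5 := (aux_mulVec_le (P * (1 - Q)) ((1 - Q) *ᵥ x)).trans (mul_le_mul_of_nonneg_right h1 (aux_vnorm_nonneg _))
    have e6 := (aux_mulVec_le ((1 - P) * Q) (Q *ᵥ x)).trans (mul_le_mul_of_nonneg_right h2 (aux_vnorm_nonneg _))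
    have e7 : ∀ y : n → ℝ, vnorm (-y) = vnorm y := fun y => by simp [vnorm]
    rw [e3, e4, e7] at e1
    have e8 := pow_le_pow_left₀ (aux_vnorm_nonneg _) e5 2
    have e9 := pow_le_pow_left₀ (aux_vnorm_nonneg _) e6 2
    rw [mul_pow] at e8 e9
    rw [← e1, ← e2]
    linarith
  obtain ⟨G, F, hFt, hFF, hGF, hcomm, hG⟩ := aux_sqrt ((P - Q) * (P - Q)) hDt (s ^ 2) (sq_nonneg _) (by nlinarith) (by
    rintro l ⟨x, hx, hl⟩
    have hp := aux_vnorm_pos x hx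
    have : vnorm ((P - Q) *ᵥ x) ^ 2 = l * vnorm x ^ 2 := by
      rw [aux_vnorm_sq, aux_dot_symm _ hPQt, Matrix.mulVec_mulVec, hl, dotProduct_smul, aux_vnorm_sq, smul_eq_mul]
    have h3 := hb x
    have hp2 : 0 < vnorm x ^ 2 := by positivity
    constructor
    · by_contra hneg
      push Not at hneg
      nlinarith [sq_nonneg (vnorm ((P - Q) *ᵥ x))]
    · rw [this] at h3
      exact le_of_mul_le_mul_right h3 hp2)
  have cP : F * P = P * F := hcomm P (by
    simp only [Commute, SemiconjBy]
    simp only [mul_sub, sub_mul, mul_one, one_mul, hPP, hQQ, mul_assoc, hPP', hQQ']; abel)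
  have cQ : F * Q = Q * F := hcomm Q (by
    simp only [Commute, SemiconjBy]
    simp only [mul_sub, sub_mul, mul_one, one_mul, hPP, hQQ, mul_assoc, hPP', hQQ']; abel)
  set Z := P * Q + (1 - P) * (1 - Q) with hZ
  have cZ : F * Z = Z * F := hcomm Z (by
    simp only [Commute, SemiconjBy, hZ]
    simp only [mul_sub, sub_mul, mul_add, add_mul, mul_one, one_mul, hPP, hQQ, mul_assoc, hPP', hQQ']; abel)
  have hZZ : Zᵀ * Z = 1 - (P - Q) * (P - Q) := by
    simp only [hZ, Matrix.transpose_add, Matrix.transpose_mul, Matrix.transpose_sub, hP, hQ, Matrix.transpose_one]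
    simp only [mul_sub, sub_mul, mul_add, add_mul, mul_one, one_mul, hPP, hQQ, mul_assoc, hPP', hQQ']; abel
  have cZt : Zᵀ * F = F * Zᵀ := by
    have := congrArg Matrix.transpose cZ
    simpa [Matrix.transpose_mul, hFt] using this
  have hWW : (F * Z)ᵀ * (F * Z) = 1 := by
    rw [Matrix.transpose_mul, hFt, cZt, ← hFF, ← hZZ]
    calc F * Zᵀ * (F * Z) = F * (Zᵀ * F) * Z := by simp only [mul_assoc]
      _ = _ := by rw [cZt]; simp only [mul_assoc]
  have hZQ : Z * Q = P * Q := by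
    simp only [hZ, mul_sub, sub_mul, mul_add, add_mul, mul_one, one_mul, hPP, hQQ, mul_assoc, hPP', hQQ']; abel
  have hPZ : P * Z = P * Q := by
    simp only [hZ, mul_sub, sub_mul, mul_add, add_mul, mul_one, one_mul, hPP, hQQ, mul_assoc, hPP', hQQ']; abel
  refine ⟨F * Z, hWW, mul_eq_one_comm.1 hWW, ?_, ?_⟩
  · rw [mul_assoc, hZQ, ← mul_assoc P, ← cP, mul_assoc F, hPZ]
  · have : P * Q - F * Z * Q = (G - 1) * ((F * Z) * Q) := by
      rw [sub_mul, one_mul, mul_assoc F, hZQ, ← mul_assoc G, hGF, one_mul]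
    rw [this]
    have a1 := aux_iso_spec _ hWW
    have a2 := aux_proj_spec Q hQ hQQ
    calc specNorm ((G - 1) * ((F * Z) * Q)) ≤ specNorm (G - 1) * (specNorm (F * Z) * specNorm Q) :=
          (aux_spec_mul _ _).trans (mul_le_mul_of_nonneg_left (aux_spec_mul _ _) (aux_spec_nonneg _))
      _ ≤ s ^ 2 * (1 * 1) := by
          gcongr
          all_goals apply_rules [mul_nonneg, aux_spec_nonneg, sq_nonneg]
      _ = s ^ 2 := by ring

lemma aux_ortho {n k : Type*} [Fintype n] [DecidableEq n] [Fintype k] [DecidableEq k] (X : Matrix n k ℝ)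
    (hX : Xᵀ * X = 1) : (1 - X * Xᵀ)ᵀ = 1 - X * Xᵀ ∧ (1 - X * Xᵀ) * (1 - X * Xᵀ) = 1 - X * Xᵀ := by
  constructor
  · simp [Matrix.transpose_mul]
  · have : X * Xᵀ * (X * Xᵀ) = X * Xᵀ := by
      rw [Matrix.mul_assoc, ← Matrix.mul_assoc Xᵀ, hX, Matrix.one_mul]
    simp only [mul_sub, sub_mul, mul_one, one_mul, this]; abel

lemma aux_gap {n k : Type*} [Fintype n] [DecidableEq n] [Fintype k] [DecidableEq k] (X Y : Matrix n k ℝ)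
    (hX : Xᵀ * X = 1) (hY : Yᵀ * Y = 1) (x : k → ℝ) :
    vnorm (((1 - X * Xᵀ) * Y) *ᵥ x) ^ 2 + vnorm ((Xᵀ * Y) *ᵥ x) ^ 2 = vnorm x ^ 2 := by
  have h := aux_ortho X hX
  have h2 := aux_pyth _ h.1 h.2 (Y *ᵥ x)
  rw [aux_iso Y hY] at h2
  rw [← h2, ← Matrix.mulVec_mulVec]
  congr 2
  rw [← aux_iso X hX, Matrix.mulVec_mulVec, Matrix.mulVec_mulVec, ← Matrix.mul_assoc]
  simp

lemma aux_rank {n k : Type*} [Fintype n] [DecidableEq n] [Fintype k] [DecidableEq k] (X Y : Matrix n k ℝ)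
    (hX : Xᵀ * X = 1) (hY : Yᵀ * Y = 1) (s : ℝ) (hs : s < 1)
    (h : specNorm ((1 - X * Xᵀ) * Y) = s) : specNorm ((1 - Y * Yᵀ) * X) ≤ s := by
  have hs0 : 0 ≤ s := h ▸ aux_spec_nonneg _
  have hlow : ∀ y, (1 - s ^ 2) * vnorm y ^ 2 ≤ vnorm ((Xᵀ * Y) *ᵥ y) ^ 2 := by
    intro y
    have h1 := aux_gap X Y hX hY y
    have h2 := aux_mulVec_le ((1 - X * Xᵀ) * Y) y
    rw [h] at h2
    have h3 := pow_le_pow_left₀ (aux_vnorm_nonneg _) h2 2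
    rw [mul_pow] at h3
    linarith
  have hc : 0 < 1 - s ^ 2 := by nlinarith
  have hinj : Function.Injective (Matrix.mulVec (Xᵀ * Y)) := by
    have : Function.Injective (Matrix.mulVecLin (Xᵀ * Y)) := by
      rw [← LinearMap.ker_eq_bot, LinearMap.ker_eq_bot']
      intro y hy
      by_contra hne
      have := aux_vnorm_pos y hne
      have h1 := hlow y
      have hz : (Xᵀ * Y) *ᵥ y = 0 := hy
      rw [hz] at h1
      have : vnorm (0 : k → ℝ) = 0 := by simp [vnorm]
      rw [this] at h1
      have : 0 < (1 - s ^ 2) * vnorm y ^ 2 := by positivity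
      linarith
    exact this
  have hsurj : Function.Surjective (Matrix.mulVec (Xᵀ * Y)) :=
    (LinearMap.injective_iff_surjective (f := Matrix.mulVecLin (Xᵀ * Y))).1 hinj
  refine aux_spec_le _ _ hs0 fun z => ?_
  obtain ⟨y, rfl⟩ := hsurj z
  have e1 := aux_gap Y X hY hX ((Xᵀ * Y) *ᵥ y)
  have e2 := aux_dot_le y ((Yᵀ * X) *ᵥ ((Xᵀ * Y) *ᵥ y))
  have e3 : y ⬝ᵥ ((Yᵀ * X) *ᵥ ((Xᵀ * Y) *ᵥ y)) = vnorm ((Xᵀ * Y) *ᵥ y) ^ 2 := by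
    rw [aux_vnorm_sq, Matrix.dotProduct_mulVec, ← Matrix.mulVec_transpose]; simp [Matrix.transpose_mul]
  rw [e3] at e2
  have e4 := hlow y
  have n1 := aux_vnorm_nonneg y
  have n2 := aux_vnorm_nonneg ((Xᵀ * Y) *ᵥ y)
  have n3 := aux_vnorm_nonneg ((Yᵀ * X) *ᵥ ((Xᵀ * Y) *ᵥ y))
  generalize vnorm ((Yᵀ * X) *ᵥ ((Xᵀ * Y) *ᵥ y)) = c at *
  generalize vnorm ((Xᵀ * Y) *ᵥ y) = b at *
  generalize vnorm y = a at *
  have key : (1 - s ^ 2) * b ^ 2 ≤ c ^ 2 := by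
    rcases n2.eq_or_lt with hb | hb
    · rw [← hb]; nlinarith [sq_nonneg c]
    · have f1 : (b ^ 2) ^ 2 ≤ (a * c) ^ 2 := pow_le_pow_left₀ (sq_nonneg _) e2 2
      have f2 : (1 - s ^ 2) * (a * c) ^ 2 ≤ b ^ 2 * c ^ 2 := by nlinarith [sq_nonneg c]
      have f3 : (1 - s ^ 2) * (b ^ 2) ^ 2 ≤ b ^ 2 * c ^ 2 := by nlinarith
      have hb2 : 0 < b ^ 2 := by positivity
      nlinarith
  refine (abs_le_of_sq_le_sq' ?_ (mul_nonneg hs0 n2)).2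
  rw [mul_pow]; linarith

lemma aux_krylov {n : Type*} [Fintype n] [DecidableEq n] (H : Matrix n n ℝ) (r : n → ℝ) (j : ℕ)
    (p : Polynomial ℝ) (hp : p.natDegree < j ∨ p = 0) : (Polynomial.aeval H p) *ᵥ r ∈ Krylov H r j := by
  rcases hp with hp | rfl
  · rw [Polynomial.aeval_eq_sum_range, Matrix.sum_mulVec]
    refine Submodule.sum_mem _ fun i hi => ?_
    rw [Matrix.smul_mulVec]
    exact Submodule.smul_mem _ _ (Submodule.subset_span ⟨i, by simp at hi; omega, rfl⟩)
  · simp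

lemma aux_cheb (a b : ℝ) (ha : 0 < a) (hab : a < b) (k : ℕ) :
    ∃ p : Polynomial ℝ, (p.natDegree < 2 * k ∨ p = 0) ∧
      ∀ t : ℝ, a ^ 2 ≤ t ^ 2 → t ^ 2 ≤ b ^ 2 →
        |(1 + Polynomial.X * p).eval t| ≤ 2 * ((b - a) / (b + a)) ^ k := by
  have hd : 0 < b ^ 2 - a ^ 2 := by nlinarith
  have hba : 0 < b - a := by linarith
  have hba' : 0 < b + a := by linarith
  set z := (b ^ 2 + a ^ 2) / (b ^ 2 - a ^ 2) with hz
  set y := (b + a) / (b - a) with hy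
  have hy0 : 0 < y := by positivity
  have hcosh : Real.cosh (Real.log y) = z := by
    rw [Real.cosh_log hy0, hy, hz]
    field_simp
    ring
  have hTz : y ^ k / 2 ≤ (Polynomial.Chebyshev.T ℝ k).eval z := by
    rw [← hcosh, Polynomial.Chebyshev.T_real_cosh, Real.cosh_eq]
    have : Real.exp (((k : ℤ) : ℝ) * Real.log y) = y ^ k := by
      rw [Int.cast_natCast, Real.exp_nat_mul, Real.exp_log hy0]
    rw [this]
    have := Real.exp_pos (-(((k : ℤ) : ℝ) * Real.log y))
    linarith
  have hTpos : 0 < (Polynomial.Chebyshev.T ℝ k).eval z := lt_of_lt_of_le (by positivity) hTz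
  set L : Polynomial ℝ := Polynomial.C z - Polynomial.C (2 / (b ^ 2 - a ^ 2)) * Polynomial.X ^ 2 with hL
  set q : Polynomial ℝ := Polynomial.C ((Polynomial.Chebyshev.T ℝ k).eval z)⁻¹ *
    (Polynomial.Chebyshev.T ℝ k).comp L with hq
  have hq0 : q.eval 0 = 1 := by
    simp [hq, hL, Polynomial.eval_comp]
    exact inv_mul_cancel₀ hTpos.ne'
  have hqdeg : q.natDegree ≤ 2 * k := by
    refine (Polynomial.natDegree_C_mul_le _ _).trans ?_
    refine Polynomial.natDegree_comp_le.trans ?_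
    have h1 : (Polynomial.Chebyshev.T ℝ k).natDegree ≤ k := by
      simp
    have h2 : L.natDegree ≤ 2 := by
      rw [hL]; compute_degree
    nlinarith
  have hdiv : Polynomial.X * q.divX + Polynomial.C (q.coeff 0) = q := Polynomial.X_mul_divX_add q
  have hc0 : q.coeff 0 = 1 := by rw [Polynomial.coeff_zero_eq_eval_zero, hq0]
  refine ⟨q.divX, ?_, ?_⟩
  · rcases Nat.eq_zero_or_pos k with hk | hk
    · right
      subst hk
      rw [Polynomial.divX_eq_zero_iff]
      exact Polynomial.eq_C_of_natDegree_le_zero (by simpa using hqdeg)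
    · left
      rw [Polynomial.natDegree_divX_eq_natDegree_tsub_one]
      omega
  · intro t h1 h2
    have : 1 + Polynomial.X * q.divX = q := by
      rw [hc0] at hdiv; rw [add_comm]; simpa using hdiv
    rw [this, hq, Polynomial.eval_mul, Polynomial.eval_C, Polynomial.eval_comp, abs_mul,
      abs_of_pos (inv_pos.2 hTpos)]
    have hLt : |L.eval t| ≤ 1 := by
      have : L.eval t = (b ^ 2 + a ^ 2 - 2 * t ^ 2) / (b ^ 2 - a ^ 2) := by
        simp [hL, hz]; ring
      rw [this, abs_le, le_div_iff₀ hd, div_le_iff₀ hd]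
      constructor <;> linarith
    have hT1 := Polynomial.Chebyshev.abs_eval_T_real_le_one k hLt
    have hyk : 0 < y ^ k := by positivity
    calc _ ≤ ((Polynomial.Chebyshev.T ℝ k).eval z)⁻¹ * 1 := by gcongr
      _ ≤ (y ^ k / 2)⁻¹ * 1 := by gcongr
      _ = 2 * ((b - a) / (b + a)) ^ k := by
        rw [hy, div_pow, div_pow]; field_simp

lemma aux_minres {n : Type*} [Fintype n] [DecidableEq n] (H P : Matrix n n ℝ) (hH : Hᵀ = H)
    (hP : Pᵀ = P) (hPP : P * P = P) (hPH : P * H = H) (hHP : H * P = H)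
    (a b : ℝ) (ha : 0 < a) (hab : a < b)
    (hlo : ∀ x, P *ᵥ x = x → a * vnorm x ≤ vnorm (H *ᵥ x))
    (hhi : ∀ x, P *ᵥ x = x → vnorm (H *ᵥ x) ≤ b * vnorm x)
    (r : n → ℝ) (hr : P *ᵥ r = r) (j : ℕ) :
    ∃ w ∈ Krylov H r j, vnorm (H *ᵥ w + r) ≤ 2 * ((b - a) / (b + a)) ^ (j / 2) * vnorm r := by
  obtain ⟨p, hp, hb⟩ := aux_cheb a b ha hab (j / 2)
  refine ⟨Polynomial.aeval H p *ᵥ r, aux_krylov H r j p (by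
    rcases hp with hp | hp
    · left; omega
    · exact Or.inr hp), ?_⟩
  set H' := H + a • (1 - P) with hH'
  have hpow : ∀ i : ℕ, P *ᵥ ((H ^ i) *ᵥ r) = (H ^ i) *ᵥ r ∧ (H' ^ i) *ᵥ r = (H ^ i) *ᵥ r := by
    intro i
    induction i with
    | zero => simp [hr]
    | succ i ih =>
      constructor
      · rw [pow_succ', Matrix.mulVec_mulVec, ← mul_assoc, hPH]
      · rw [pow_succ', pow_succ', ← Matrix.mulVec_mulVec, ih.2, ← Matrix.mulVec_mulVec, hH', Matrix.add_mulVec,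
          Matrix.smul_mulVec, Matrix.sub_mulVec, ih.1]
        simp
  have hae : ∀ q : Polynomial ℝ, Polynomial.aeval H' q *ᵥ r = Polynomial.aeval H q *ᵥ r := by
    intro q
    simp only [Polynomial.aeval_eq_sum_range, Matrix.sum_mulVec, Matrix.smul_mulVec, (hpow _).2]
  have heq : H *ᵥ (Polynomial.aeval H p *ᵥ r) + r = Polynomial.aeval H' (1 + Polynomial.X * p) *ᵥ r := by
    rw [hae]
    simp [Matrix.add_mulVec, add_comm]
  rw [heq]
  refine (aux_mulVec_le _ _).trans (mul_le_mul_of_nonneg_right ?_ (aux_vnorm_nonneg _))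
  have hfr : 0 ≤ (b - a) / (b + a) := div_nonneg (by linarith) (by linarith)
  refine aux_poly H' (by simp [hH', hH, hP]) _ _ (by positivity) ?_
  rintro l ⟨x, hx, hl⟩
  have hxp := aux_vnorm_pos x hx
  have py1 := aux_pyth P hP hPP x
  have py2 := aux_pyth P hP hPP (H' *ᵥ x)
  have q1 : P *ᵥ (H' *ᵥ x) = H *ᵥ (P *ᵥ x) := by
    rw [Matrix.mulVec_mulVec, Matrix.mulVec_mulVec, hH', hHP, mul_add, hPH]
    simp [mul_sub, hPP]
  have q2 : (1 - P) *ᵥ (H' *ᵥ x) = a • ((1 - P) *ᵥ x) := by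
    rw [Matrix.mulVec_mulVec, ← Matrix.smul_mulVec, hH']
    congr 1
    simp [mul_sub, sub_mul, mul_add, hPP, hPH]
  have hPx : P *ᵥ (P *ᵥ x) = P *ᵥ x := by rw [Matrix.mulVec_mulVec, hPP]
  rw [q1, q2, aux_vnorm_smul, hl, aux_vnorm_smul, mul_pow, mul_pow, sq_abs, sq_abs] at py2
  have l1 := pow_le_pow_left₀ (mul_nonneg ha.le (aux_vnorm_nonneg _)) (hlo _ hPx) 2
  have l2 := pow_le_pow_left₀ (aux_vnorm_nonneg _) (hhi _ hPx) 2
  rw [mul_pow] at l1 l2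
  have hx2 : 0 < vnorm x ^ 2 := by positivity
  refine hb l ?_ ?_
  · refine le_of_mul_le_mul_right ?_ hx2
    rw [← py2, ← py1]; linarith
  · refine le_of_mul_le_mul_right ?_ hx2
    rw [← py2, ← py1]
    have : a ^ 2 * vnorm ((1 - P) *ᵥ x) ^ 2 ≤ b ^ 2 * vnorm ((1 - P) *ᵥ x) ^ 2 := by gcongr
    linarith

lemma aux_vnorm_elim {p q : Type*} [Fintype p] [Fintype q] (u : p → ℝ) (v : q → ℝ) :
    vnorm (Sum.elim u v) ^ 2 = vnorm u ^ 2 + vnorm v ^ 2 := by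
  simp only [aux_vnorm_sq, dotProduct, Fintype.sum_sum_type, Sum.elim_inl, Sum.elim_inr]

lemma aux_vnorm_sub_le {ι : Type*} [Fintype ι] (x y : ι → ℝ) : vnorm (x - y) ≤ vnorm x + vnorm y := by
  simp only [aux_vnorm_eq, WithLp.toLp_sub]; exact norm_sub_le _ _

lemma aux_le_elim {p q : Type*} [Fintype p] [Fintype q] (u u' : p → ℝ) (v v' : q → ℝ) (c c' : ℝ)
    (_hc : 0 ≤ c) (hc' : 0 ≤ c')
    (h : c ^ 2 * (vnorm u ^ 2 + vnorm v ^ 2) ≤ c' ^ 2 * (vnorm u' ^ 2 + vnorm v' ^ 2)) :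
    c * vnorm (Sum.elim u v) ≤ c' * vnorm (Sum.elim u' v') := by
  refine (abs_le_of_sq_le_sq' ?_ (mul_nonneg hc' (aux_vnorm_nonneg _))).2
  rw [mul_pow, mul_pow, aux_vnorm_elim, aux_vnorm_elim]; exact h

lemma aux_perturb {p q : Type*} [Fintype p] [Fintype q] [DecidableEq p] [DecidableEq q]
    (A : Matrix p q ℝ) (P1 Q1 : Matrix p p ℝ) (P2 Q2 : Matrix q q ℝ)
    (hP1 : P1ᵀ = P1) (hPP1 : P1 * P1 = P1) (hQ1 : Q1ᵀ = Q1) (hQQ1 : Q1 * Q1 = Q1)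
    (hP2 : P2ᵀ = P2) (hPP2 : P2 * P2 = P2) (hQ2 : Q2ᵀ = Q2) (hQQ2 : Q2 * Q2 = Q2)
    (hAQ : A * Q2 = Q1 * A) (s t d τ : ℝ) (hs0 : 0 ≤ s) (hs : s < 1) (ht0 : 0 ≤ t) (ht : t < 1)
    (hd : 0 ≤ d)
    (h1 : specNorm (P1 * (1 - Q1)) ≤ s) (h2 : specNorm ((1 - P1) * Q1) ≤ s)
    (h3 : specNorm (P2 * (1 - Q2)) ≤ t) (h4 : specNorm ((1 - P2) * Q2) ≤ t)
    (hex : ∀ u v, Q1 *ᵥ u = u → Q2 *ᵥ v = v → d ^ 2 * (vnorm u ^ 2 + vnorm v ^ 2) ≤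
      vnorm (A *ᵥ v - τ • u) ^ 2 + vnorm (Aᵀ *ᵥ u - τ • v) ^ 2)
    (u : p → ℝ) (v : q → ℝ) (hu : P1 *ᵥ u = u) (hv : P2 *ᵥ v = v) :
    (d - specNorm A * (s + t) ^ 2) * vnorm (Sum.elim u v) ≤
      vnorm (Sum.elim ((P1 * A * P2) *ᵥ v - τ • u) ((P1 * A * P2)ᵀ *ᵥ u - τ • v)) := by
  obtain ⟨W1, hW1, hW1', hWQ1, hE1⟩ := aux_nagy P1 Q1 hP1 hPP1 hQ1 hQQ1 s hs0 hs h1 h2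
  obtain ⟨W2, hW2, hW2', hWQ2, hE2⟩ := aux_nagy P2 Q2 hP2 hPP2 hQ2 hQQ2 t ht0 ht h3 h4
  set K := W1 * A * Q2 * W2ᵀ with hK
  set E := P1 * A * P2 - K with hE
  have hQA : Q2 * Aᵀ = Aᵀ * Q1 := by
    have := congrArg Matrix.transpose hAQ
    simpa [Matrix.transpose_mul, hQ1, hQ2] using this
  have comm1 : Q1 * W1ᵀ = W1ᵀ * P1 := by
    have := congrArg Matrix.transpose hWQ1
    simpa [Matrix.transpose_mul, hQ1, hP1] using this
  have comm2 : Q2 * W2ᵀ = W2ᵀ * P2 := by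
    have := congrArg Matrix.transpose hWQ2
    simpa [Matrix.transpose_mul, hQ2, hP2] using this
  have nA := aux_spec_nonneg A
  -- the error term
  have hEeq : E = (P1 * (1 - Q1)) * A * (P2 * (1 - Q2))ᵀ + (P1 * Q1 - W1 * Q1) * A * (Q2 * P2)
      + (W1 * Q1) * A * (P2 * Q2 - W2 * Q2)ᵀ := by
    have hAQ' : ∀ X : Matrix q q ℝ, Q1 * (A * X) = A * (Q2 * X) := fun X => by
      rw [← Matrix.mul_assoc, ← hAQ, Matrix.mul_assoc]
    have hQQ2' : ∀ X : Matrix q q ℝ, Q2 * (Q2 * X) = Q2 * X := fun X => by rw [← mul_assoc, hQQ2]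
    simp only [hE, hK, Matrix.transpose_mul, Matrix.transpose_sub, Matrix.transpose_one, hP2, hQ2,
      Matrix.mul_sub, Matrix.sub_mul, Matrix.mul_one, Matrix.one_mul, Matrix.mul_assoc, hAQ', hQQ2']
    abel
  have mul3 : ∀ (X : Matrix p p ℝ) (Y : Matrix q q ℝ) (x y : ℝ), 0 ≤ x → specNorm X ≤ x → specNorm Y ≤ y →
      specNorm (X * A * Y) ≤ x * specNorm A * y := by
    intro X Y x y hx hX hY
    refine (aux_spec_mul _ _).trans ?_
    refine mul_le_mul ((aux_spec_mul _ _).trans (mul_le_mul_of_nonneg_right hX nA)) hY (aux_spec_nonneg _)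
      (mul_nonneg hx nA)
  have nWQ : specNorm (W1 * Q1) ≤ 1 := (aux_spec_mul _ _).trans
    (mul_le_one₀ (aux_iso_spec _ hW1) (aux_spec_nonneg _) (aux_proj_spec _ hQ1 hQQ1))
  have nQP : specNorm (Q2 * P2) ≤ 1 := (aux_spec_mul _ _).trans
    (mul_le_one₀ (aux_proj_spec _ hQ2 hQQ2) (aux_spec_nonneg _) (aux_proj_spec _ hP2 hPP2))
  have hEn : specNorm E ≤ specNorm A * (s + t) ^ 2 := by
    rw [hEeq]
    have b1 := mul3 _ _ s t hs0 h1 ((aux_spec_tr _).trans h3)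
    have b2 := mul3 _ _ (s ^ 2) 1 (sq_nonneg _) hE1 nQP
    have b3 := mul3 _ _ 1 (t ^ 2) zero_le_one nWQ ((aux_spec_tr _).trans hE2)
    refine (aux_spec_add _ _).trans ((add_le_add ((aux_spec_add _ _).trans (add_le_add b1 b2)) b3).trans ?_)
    nlinarith [mul_nonneg nA (mul_nonneg hs0 ht0)]
  -- the rotated exact part
  have hu' : Q1 *ᵥ (W1ᵀ *ᵥ u) = W1ᵀ *ᵥ u := by
    rw [Matrix.mulVec_mulVec, comm1, ← Matrix.mulVec_mulVec, hu]
  have hv' : Q2 *ᵥ (W2ᵀ *ᵥ v) = W2ᵀ *ᵥ v := by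
    rw [Matrix.mulVec_mulVec, comm2, ← Matrix.mulVec_mulVec, hv]
  have hKv : K *ᵥ v - τ • u = W1 *ᵥ (A *ᵥ (W2ᵀ *ᵥ v) - τ • (W1ᵀ *ᵥ u)) := by
    rw [Matrix.mulVec_sub, Matrix.mulVec_smul, Matrix.mulVec_mulVec u, hW1', Matrix.one_mulVec, hK,
      ← hv']
    simp only [Matrix.mulVec_mulVec, Matrix.mul_assoc]
  have hKu : Kᵀ *ᵥ u - τ • v = W2 *ᵥ (Aᵀ *ᵥ (W1ᵀ *ᵥ u) - τ • (W2ᵀ *ᵥ v)) := by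
    rw [Matrix.mulVec_sub, Matrix.mulVec_smul, Matrix.mulVec_mulVec v, hW2', Matrix.one_mulVec, hK,
      ← hu']
    simp only [Matrix.mulVec_mulVec, Matrix.mul_assoc, Matrix.transpose_mul, Matrix.transpose_transpose, hQ2]
    rw [← Matrix.mul_assoc Q2, hQA, Matrix.mul_assoc]
  have low : d * vnorm (Sum.elim u v) ≤ vnorm (Sum.elim (K *ᵥ v - τ • u) (Kᵀ *ᵥ u - τ • v)) := by
    have := hex _ _ hu' hv'
    rw [aux_iso W1ᵀ (by simpa using hW1'), aux_iso W2ᵀ (by simpa using hW2')] at this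
    have h := aux_le_elim u (K *ᵥ v - τ • u) v (Kᵀ *ᵥ u - τ • v) d 1 hd zero_le_one (by
      rw [hKv, hKu, aux_iso W1 hW1, aux_iso W2 hW2]
      linarith)
    linarith
  have err : vnorm (Sum.elim (E *ᵥ v) (Eᵀ *ᵥ u)) ≤ specNorm A * (s + t) ^ 2 * vnorm (Sum.elim u v) := by
    have nd : 0 ≤ specNorm A * (s + t) ^ 2 := by positivity
    have h := aux_le_elim (E *ᵥ v) u (Eᵀ *ᵥ u) v 1 _ zero_le_one nd (by
      have e1 := pow_le_pow_left₀ (aux_vnorm_nonneg _) ((aux_mulVec_le E v).trans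
        (mul_le_mul_of_nonneg_right hEn (aux_vnorm_nonneg _))) 2
      have e2 := pow_le_pow_left₀ (aux_vnorm_nonneg _) ((aux_mulVec_le Eᵀ u).trans
        (mul_le_mul_of_nonneg_right ((aux_spec_tr E).trans hEn) (aux_vnorm_nonneg _))) 2
      rw [mul_pow] at e1 e2
      linarith)
    linarith
  have split : Sum.elim (K *ᵥ v - τ • u) (Kᵀ *ᵥ u - τ • v) =
      Sum.elim ((P1 * A * P2) *ᵥ v - τ • u) ((P1 * A * P2)ᵀ *ᵥ u - τ • v) - Sum.elim (E *ᵥ v) (Eᵀ *ᵥ u) := by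
    funext i
    rcases i with i | i <;> simp [hE, Matrix.sub_mulVec]
  rw [split] at low
  have tri := low.trans (aux_vnorm_sub_le _ _)
  linarith

lemma aux_svd_sum {M N : ℕ} (hMN : N ≤ M) (σ : Fin N → ℝ)
    (S : Matrix (Fin M) (Fin N) ℝ)
    (hS : ∀ i j, S i j = if (i : ℕ) = (j : ℕ) then σ j else 0) (τ c d : ℝ) (a : Fin M → ℝ) (b : Fin N → ℝ)
    (hj : ∀ j : Fin N, c * (a (Fin.castLE hMN j) ^ 2 + b j ^ 2) ≤ d * ((σ j * b j - τ * a (Fin.castLE hMN j)) ^ 2 +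
        (σ j * a (Fin.castLE hMN j) - τ * b j) ^ 2))
    (hi : ∀ x : ℝ, c * x ^ 2 ≤ d * (τ * x) ^ 2) :
    c * (vnorm a ^ 2 + vnorm b ^ 2) ≤ d * (vnorm (S *ᵥ b - τ • a) ^ 2 + vnorm (Sᵀ *ᵥ a - τ • b) ^ 2) := by
  obtain ⟨k, rfl⟩ := Nat.exists_eq_add_of_le hMN
  have e1 : ∀ j : Fin N, (S *ᵥ b) (Fin.castAdd k j) = σ j * b j := by
    intro j
    simp only [Matrix.mulVec, dotProduct, hS, Fin.val_castAdd, Fin.val_inj, ite_mul, zero_mul]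
    simp
  have e2 : ∀ i : Fin k, (S *ᵥ b) (Fin.natAdd N i) = 0 := by
    intro i
    simp only [Matrix.mulVec, dotProduct, hS, Fin.val_natAdd]
    refine Finset.sum_eq_zero fun j _ => ?_
    rw [if_neg (by omega), zero_mul]
  have e3 : ∀ j : Fin N, (Sᵀ *ᵥ a) j = σ j * a (Fin.castAdd k j) := by
    intro j
    simp only [Matrix.mulVec, dotProduct, Matrix.transpose_apply, hS]
    rw [Finset.sum_eq_single (Fin.castAdd k j)]
    · simp
    · intro i _ hne
      have hij : ¬ ((i : ℕ) = (j : ℕ)) := fun h => hne (Fin.ext h)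
      rw [if_neg hij, zero_mul]
    · simp
  have s1 : vnorm a ^ 2 + vnorm b ^ 2 = ∑ j, (a (Fin.castAdd k j) ^ 2 + b j ^ 2) + ∑ i, a (Fin.natAdd N i) ^ 2 := by
    rw [aux_vnorm_sq, aux_vnorm_sq]
    simp only [dotProduct, Fin.sum_univ_add, Finset.sum_add_distrib, sq]; ring
  have s2 : vnorm (S *ᵥ b - τ • a) ^ 2 + vnorm (Sᵀ *ᵥ a - τ • b) ^ 2 =
      ∑ j, ((σ j * b j - τ * a (Fin.castAdd k j)) ^ 2 + (σ j * a (Fin.castAdd k j) - τ * b j) ^ 2) +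
        ∑ i, (τ * a (Fin.natAdd N i)) ^ 2 := by
    rw [aux_vnorm_sq, aux_vnorm_sq]
    simp only [dotProduct, Fin.sum_univ_add, Finset.sum_add_distrib, Pi.sub_apply, Pi.smul_apply, e1, e2, e3,
      smul_eq_mul, zero_sub, sq, neg_mul_neg]; ring
  rw [s1, s2, mul_add, mul_add, Finset.mul_sum, Finset.mul_sum, Finset.mul_sum, Finset.mul_sum]
  refine add_le_add (Finset.sum_le_sum fun j _ => hj j) (Finset.sum_le_sum fun i _ => hi _)

lemma aux_svd_eq {M N : ℕ} (A : Matrix (Fin M) (Fin N) ℝ)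
    (U : Matrix (Fin M) (Fin M) ℝ) (V : Matrix (Fin N) (Fin N) ℝ)
    (hU : Uᵀ * U = 1) (hV : Vᵀ * V = 1) (S : Matrix (Fin M) (Fin N) ℝ) (hA : A = U * S * Vᵀ) (τ : ℝ)
    (u : Fin M → ℝ) (v : Fin N → ℝ) :
    vnorm u = vnorm (Uᵀ *ᵥ u) ∧ vnorm v = vnorm (Vᵀ *ᵥ v) ∧
    vnorm (A *ᵥ v - τ • u) = vnorm (S *ᵥ (Vᵀ *ᵥ v) - τ • (Uᵀ *ᵥ u)) ∧
    vnorm (Aᵀ *ᵥ u - τ • v) = vnorm (Sᵀ *ᵥ (Uᵀ *ᵥ u) - τ • (Vᵀ *ᵥ v)) := by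
  have hU' : U * Uᵀ = 1 := mul_eq_one_comm.1 hU
  have hV' : V * Vᵀ = 1 := mul_eq_one_comm.1 hV
  refine ⟨(aux_iso Uᵀ (by simpa using hU') u).symm, (aux_iso Vᵀ (by simpa using hV') v).symm, ?_, ?_⟩
  · rw [← aux_iso U hU (S *ᵥ (Vᵀ *ᵥ v) - τ • (Uᵀ *ᵥ u))]
    congr 1
    rw [Matrix.mulVec_sub, Matrix.mulVec_smul]
    simp only [Matrix.mulVec_mulVec, hU', Matrix.one_mulVec, hA, Matrix.mul_assoc]
  · rw [← aux_iso V hV (Sᵀ *ᵥ (Uᵀ *ᵥ u) - τ • (Vᵀ *ᵥ v))]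
    congr 1
    rw [Matrix.mulVec_sub, Matrix.mulVec_smul]
    simp only [Matrix.mulVec_mulVec, hV', Matrix.one_mulVec, hA, Matrix.mul_assoc, Matrix.transpose_mul,
      Matrix.transpose_transpose]

lemma aux_g1 {n k : Type*} [Fintype n] [DecidableEq n] [Fintype k] [DecidableEq k] (X Y : Matrix n k ℝ)
    (hY : Yᵀ * Y = 1) :
    specNorm ((1 - X * Xᵀ) * (1 - (1 - Y * Yᵀ))) ≤ specNorm ((1 - X * Xᵀ) * Y) := by
  rw [sub_sub_cancel, ← Matrix.mul_assoc]
  refine (aux_spec_mul _ _).trans (mul_le_of_le_one_right (aux_spec_nonneg _) ?_)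
  exact (aux_spec_tr _).trans (aux_iso_spec Y hY)

lemma aux_g2 {n k : Type*} [Fintype n] [DecidableEq n] [Fintype k] [DecidableEq k] (X Y : Matrix n k ℝ)
    (hX : Xᵀ * X = 1) (hY : Yᵀ * Y = 1) (s : ℝ) (hs : s < 1)
    (h : specNorm ((1 - X * Xᵀ) * Y) = s) :
    specNorm ((1 - (1 - X * Xᵀ)) * (1 - Y * Yᵀ)) ≤ s := by
  have h1 := aux_rank X Y hX hY s hs h
  have h2 : (1 - (1 - X * Xᵀ)) * (1 - Y * Yᵀ) = ((1 - Y * Yᵀ) * (1 - (1 - X * Xᵀ)))ᵀ := by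
    simp [Matrix.transpose_mul]
  rw [h2]
  exact (aux_spec_tr _).trans ((aux_g1 Y X hX).trans h1)

/-- Theorem 4.4(iii). MINRES bound for the preconditioned JDSVD
correction equation with approximate singular subspaces, in the interior case. -/
theorem minres_bound_precond_approx_interior {M N m : ℕ} (hN : 2 ≤ N) (hMN : N ≤ M)
    (hm : 1 ≤ m) (hmN : m < N)
    (A : Matrix (Fin M) (Fin N) ℝ)
    (U : Matrix (Fin M) (Fin M) ℝ) (V : Matrix (Fin N) (Fin N) ℝ)
    (hU : Uᵀ * U = 1) (hV : Vᵀ * V = 1)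
    (σ : Fin N → ℝ) (hσ : ∀ i, 0 ≤ σ i)
    (S : Matrix (Fin M) (Fin N) ℝ)
    (hS : ∀ i j, S i j = if (i : ℕ) = (j : ℕ) then σ j else 0)
    (hA : A = U * S * Vᵀ)
    (τ : ℝ) (hτ0 : 0 ≤ τ)
    (hclosest : ∀ i j : Fin N, (i : ℕ) < m → m ≤ (j : ℕ) → |σ i - τ| ≤ |σ j - τ|)
    (hτσ : ∀ i : Fin N, τ ≠ σ i)
    (σmax σmaxm1 σmin σminm1 : ℝ)
    (hσmax : IsGreatest (Set.range σ) σmax)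
    (hσmaxm1 : IsGreatest (σ '' {i : Fin N | m ≤ (i : ℕ)}) σmaxm1)
    (hσmin : IsLeast (Set.range σ) σmin)
    (hσminm1 : IsLeast (σ '' {i : Fin N | m ≤ (i : ℕ)}) σminm1)
    (hτ1 : (σmin + σminm1) / 2 < τ) (hτ2 : τ < (σmax + σmaxm1) / 2)
    (dm1 : ℝ)
    (hdm1 : IsLeast ((fun i => |σ i - τ|) '' {i : Fin N | m ≤ (i : ℕ)}) dm1)
    (Um : Matrix (Fin M) (Fin m) ℝ)
    (hUm : ∀ i j, Um i j = U i ⟨(j : ℕ), by have := j.isLt; omega⟩)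
    (Vm : Matrix (Fin N) (Fin m) ℝ)
    (hVm : ∀ i j, Vm i j = V i ⟨(j : ℕ), by have := j.isLt; omega⟩)
    (Ut : Matrix (Fin M) (Fin m) ℝ) (Vt : Matrix (Fin N) (Fin m) ℝ)
    (hUt : Utᵀ * Ut = 1) (hVt : Vtᵀ * Vt = 1)
    (δ : ℝ)
    (hδ : δ = specNorm A *
      (specNorm ((1 - Ut * Utᵀ) * Um) + specNorm ((1 - Vt * Vtᵀ) * Vm)) ^ 2)
    (hδsmall : δ < dm1)
    (B P Bm : Matrix (Fin M ⊕ Fin N) (Fin M ⊕ Fin N) ℝ)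
    (hB : B = Matrix.fromBlocks ((-τ) • 1) A Aᵀ ((-τ) • 1))
    (hP : P = Matrix.fromBlocks (1 - Ut * Utᵀ) 0 0 (1 - Vt * Vtᵀ))
    (hBm : Bm = P * B * P)
    (r : Fin M ⊕ Fin N → ℝ) (hr : P *ᵥ r = r) :
    ∀ j : ℕ, ∃ w ∈ Krylov Bm r j,
      vnorm (Bm *ᵥ w + r) ≤
        2 * (1 - 2 / (1 + (σmax + τ + δ) / (dm1 - δ))) ^ (j / 2) * vnorm r := by
  obtain ⟨⟨i0, hi0⟩, hmax⟩ := hσmax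
  obtain ⟨⟨i1, hi1m, hi1⟩, hmax1⟩ := hσmaxm1
  obtain ⟨⟨i2, hi2⟩, hmin⟩ := hσmin
  obtain ⟨⟨i3, hi3m, hi3⟩, hmin1⟩ := hσminm1
  obtain ⟨⟨i4, hi4m, hi4⟩, hd⟩ := hdm1
  have hd0 : 0 ≤ dm1 := by rw [← hi4]; exact abs_nonneg _
  have hle : ∀ j, σ j ≤ σmax := fun j => hmax ⟨j, rfl⟩
  have hdj : ∀ j : Fin N, m ≤ (j : ℕ) → dm1 ≤ |σ j - τ| := fun j hj => hd ⟨j, hj, rfl⟩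
  have hlow : σminm1 < τ := by
    by_contra hcon
    push Not at hcon
    rcases Nat.lt_or_ge (i2 : ℕ) m with h | h
    · have h1 := hclosest i2 i3 h hi3m
      rw [hi2, hi3, abs_of_nonneg (sub_nonneg.2 hcon)] at h1
      have := neg_abs_le (σmin - τ)
      linarith
    · have h1 : σminm1 ≤ σ i2 := hmin1 ⟨i2, h, rfl⟩
      linarith
  have hhigh : τ < σmaxm1 := by
    by_contra hcon
    push Not at hcon
    rcases Nat.lt_or_ge (i0 : ℕ) m with h | h
    · have h1 := hclosest i0 i1 h hi1m
      rw [hi0, hi1, abs_of_nonpos (sub_nonpos.2 hcon)] at h1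
      have := le_abs_self (σmax - τ)
      linarith
    · have h1 : σ i0 ≤ σmaxm1 := hmax1 ⟨i0, h, rfl⟩
      linarith
  have hs3 : 0 ≤ σminm1 := by rw [← hi3]; exact hσ _
  have hdτ : dm1 ≤ τ := by
    have := hdj i3 hi3m
    rw [hi3, abs_of_neg (sub_neg.2 hlow)] at this
    linarith
  have hdσ : dm1 ≤ σmax := by
    have h1 := hdj i1 hi1m
    rw [hi1, abs_of_pos (sub_pos.2 hhigh)] at h1
    have := hle i1
    linarith
  have hτpos : 0 < τ := by linarith
  have hAσ : σmax ≤ specNorm A := by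
    have h1 := aux_mulVec_le A (V *ᵥ Pi.single i0 1)
    rw [aux_iso V hV] at h1
    have h2 := (aux_svd_eq A U V hU hV S hA 0 0 (V *ᵥ Pi.single i0 1)).2.2.1
    rw [zero_smul, sub_zero, zero_smul, sub_zero, Matrix.mulVec_mulVec (Pi.single i0 1) Vᵀ V, hV,
      Matrix.one_mulVec] at h2
    have h3 : vnorm (Pi.single i0 1 : Fin N → ℝ) = 1 := by
      rw [← sq_eq_sq₀ (aux_vnorm_nonneg _) zero_le_one, aux_vnorm_sq]; simp
    rw [h2, h3, mul_one] at h1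
    refine le_trans ?_ h1
    refine (abs_le_of_sq_le_sq' ?_ (aux_vnorm_nonneg _)).2
    rw [vnorm, Real.sq_sqrt (Finset.sum_nonneg fun i _ => sq_nonneg _)]
    have h4 : (S *ᵥ Pi.single i0 1) (Fin.castLE hMN i0) = σmax := by
      simp [hS, hi0]
    calc σmax ^ 2 = (S *ᵥ Pi.single i0 1) (Fin.castLE hMN i0) ^ 2 := by rw [h4]
      _ ≤ _ := Finset.single_le_sum (f := fun k => (S *ᵥ Pi.single i0 1) k ^ 2)
        (fun i _ => sq_nonneg _) (Finset.mem_univ _)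
  set s := specNorm ((1 - Ut * Utᵀ) * Um) with hs
  set t := specNorm ((1 - Vt * Vtᵀ) * Vm) with ht
  have hs0 : 0 ≤ s := aux_spec_nonneg _
  have ht0 : 0 ≤ t := aux_spec_nonneg _
  have hst : s + t < 1 := by
    by_contra hcon
    push Not at hcon
    have h1 : 1 ≤ (s + t) ^ 2 := by nlinarith
    have := aux_spec_nonneg A
    nlinarith
  have hδ0 : 0 ≤ δ := by rw [hδ]; exact mul_nonneg (aux_spec_nonneg _) (sq_nonneg _)
  -- the exact singular vectors
  have hUmU : Um = U.submatrix id (Fin.castLE (by omega : m ≤ M)) := by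
    ext i j; rw [hUm]; rfl
  have hVmV : Vm = V.submatrix id (Fin.castLE hmN.le) := by
    ext i j; rw [hVm]; rfl
  have hUmo : Umᵀ * Um = 1 := by
    ext i j
    have := congrFun (congrFun hU (Fin.castLE (by omega : m ≤ M) i)) (Fin.castLE (by omega : m ≤ M) j)
    simp only [Matrix.mul_apply, Matrix.transpose_apply, Matrix.one_apply, Fin.castLE_inj] at this
    simpa [hUmU, Matrix.mul_apply, Matrix.one_apply] using this
  have hVmo : Vmᵀ * Vm = 1 := by
    ext i j
    have := congrFun (congrFun hV (Fin.castLE hmN.le i)) (Fin.castLE hmN.le j)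
    simp only [Matrix.mul_apply, Matrix.transpose_apply, Matrix.one_apply, Fin.castLE_inj] at this
    simpa [hVmV, Matrix.mul_apply, Matrix.one_apply] using this
  have hAV : A * Vm = Um * Matrix.diagonal (fun j => σ (Fin.castLE hmN.le j)) := by
    have e1 : A * V = U * S := by rw [hA, Matrix.mul_assoc, hV, Matrix.mul_one]
    ext i j
    have e2 := congrFun (congrFun e1 i) (Fin.castLE hmN.le j)
    rw [Matrix.mul_diagonal]
    have e3 : (U * S) i (Fin.castLE hmN.le j) = U i (Fin.castLE (by omega : m ≤ M) j) * σ (Fin.castLE hmN.le j) := by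
      rw [Matrix.mul_apply, Finset.sum_eq_single (Fin.castLE (by omega : m ≤ M) j)]
      · simp [hS]
      · intro k _ hne
        have hij : ¬ ((k : ℕ) = ((Fin.castLE hmN.le j : Fin N) : ℕ)) := fun h => hne (Fin.ext h)
        rw [hS, if_neg hij, mul_zero]
      · simp
    rw [e3] at e2
    simpa [hUmU, hVmV, Matrix.mul_apply] using e2
  have hAU : Aᵀ * Um = Vm * Matrix.diagonal (fun j => σ (Fin.castLE hmN.le j)) := by
    have e1 : Aᵀ * U = V * Sᵀ := by
      rw [hA, Matrix.transpose_mul, Matrix.transpose_mul, Matrix.transpose_transpose, Matrix.mul_assoc,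
        Matrix.mul_assoc, hU, Matrix.mul_one]
    ext i j
    have e2 := congrFun (congrFun e1 i) (Fin.castLE (by omega : m ≤ M) j)
    rw [Matrix.mul_diagonal]
    have e3 : (V * Sᵀ) i (Fin.castLE (by omega : m ≤ M) j) = V i (Fin.castLE hmN.le j) * σ (Fin.castLE hmN.le j) := by
      rw [Matrix.mul_apply, Finset.sum_eq_single (Fin.castLE hmN.le j)]
      · simp [hS]
      · intro k _ hne
        have hij : ¬ (((Fin.castLE (by omega : m ≤ M) j : Fin M) : ℕ) = (k : ℕ)) := fun h => hne (Fin.ext h.symm)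
        rw [Matrix.transpose_apply, hS, if_neg hij, mul_zero]
      · simp
    rw [e3] at e2
    simpa [hUmU, hVmV, Matrix.mul_apply] using e2
  have hcomm : A * (1 - Vm * Vmᵀ) = (1 - Um * Umᵀ) * A := by
    have e1 : Umᵀ * A = Matrix.diagonal (fun j => σ (Fin.castLE hmN.le j)) * Vmᵀ := by
      have := congrArg Matrix.transpose hAU
      simpa [Matrix.transpose_mul] using this
    rw [Matrix.mul_sub, Matrix.sub_mul, Matrix.mul_one, Matrix.one_mul, ← Matrix.mul_assoc, hAV,
      Matrix.mul_assoc Um Umᵀ, e1, Matrix.mul_assoc]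
  obtain ⟨hP1, hPP1⟩ := aux_ortho Ut hUt
  obtain ⟨hP2, hPP2⟩ := aux_ortho Vt hVt
  obtain ⟨hQ1, hQQ1⟩ := aux_ortho Um hUmo
  obtain ⟨hQ2, hQQ2⟩ := aux_ortho Vm hVmo
  have g1 : specNorm ((1 - Ut * Utᵀ) * (1 - (1 - Um * Umᵀ))) ≤ s := aux_g1 Ut Um hUmo
  have g3 : specNorm ((1 - Vt * Vtᵀ) * (1 - (1 - Vm * Vmᵀ))) ≤ t := aux_g1 Vt Vm hVmo
  have g2 : specNorm ((1 - (1 - Ut * Utᵀ)) * (1 - Um * Umᵀ)) ≤ s :=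
    aux_g2 Ut Um hUt hUmo s (by linarith) rfl
  have g4 : specNorm ((1 - (1 - Vt * Vtᵀ)) * (1 - Vm * Vmᵀ)) ≤ t :=
    aux_g2 Vt Vm hVt hVmo t (by linarith) rfl
  have hex : ∀ u v, (1 - Um * Umᵀ) *ᵥ u = u → (1 - Vm * Vmᵀ) *ᵥ v = v →
      dm1 ^ 2 * (vnorm u ^ 2 + vnorm v ^ 2) ≤
      vnorm (A *ᵥ v - τ • u) ^ 2 + vnorm (Aᵀ *ᵥ u - τ • v) ^ 2 := by
    intro u v hu hv
    obtain ⟨e1, e2, e3, e4⟩ := aux_svd_eq A U V hU hV S hA τ u v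
    rw [e1, e2, e3, e4]
    have z1 : ∀ j : Fin m, (Uᵀ *ᵥ u) (Fin.castLE (by omega : m ≤ M) j) = 0 := by
      intro j
      have h0 : Umᵀ *ᵥ u = 0 := by
        rw [← hu, Matrix.mulVec_mulVec, Matrix.mul_sub, ← Matrix.mul_assoc, hUmo]; simp
      have := congrFun h0 j
      simpa [hUmU, Matrix.mulVec, dotProduct] using this
    have z2 : ∀ j : Fin m, (Vᵀ *ᵥ v) (Fin.castLE hmN.le j) = 0 := by
      intro j
      have h0 : Vmᵀ *ᵥ v = 0 := by
        rw [← hv, Matrix.mulVec_mulVec, Matrix.mul_sub, ← Matrix.mul_assoc, hVmo]; simp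
      have := congrFun h0 j
      simpa [hVmV, Matrix.mulVec, dotProduct] using this
    have := aux_svd_sum hMN σ S hS τ (dm1 ^ 2) 1 (Uᵀ *ᵥ u) (Vᵀ *ᵥ v) (by
      intro j
      rcases Nat.lt_or_ge (j : ℕ) m with h | h
      · have y1 : (Uᵀ *ᵥ u) (Fin.castLE hMN j) = 0 := z1 ⟨j, h⟩
        have y2 : (Vᵀ *ᵥ v) j = 0 := z2 ⟨j, h⟩
        rw [y1, y2]; simp
      · have y1 : dm1 ^ 2 ≤ (σ j - τ) ^ 2 := by
          rw [← sq_abs (σ j - τ)]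
          exact pow_le_pow_left₀ hd0 (hdj j h) 2
        generalize (Uᵀ *ᵥ u) (Fin.castLE hMN j) = a
        generalize (Vᵀ *ᵥ v) j = b
        have y2 : 0 ≤ σ j * τ * (a - b) ^ 2 := mul_nonneg (mul_nonneg (hσ j) hτ0) (sq_nonneg _)
        have y3 : dm1 ^ 2 * (a ^ 2 + b ^ 2) ≤ (σ j - τ) ^ 2 * (a ^ 2 + b ^ 2) := by gcongr
        linarith) (by
      intro x
      rw [one_mul, mul_pow]
      gcongr)
    linarith
  have hup : ∀ (u : Fin M → ℝ) (v : Fin N → ℝ),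
      vnorm (A *ᵥ v - τ • u) ^ 2 + vnorm (Aᵀ *ᵥ u - τ • v) ^ 2 ≤
        (σmax + τ) ^ 2 * (vnorm u ^ 2 + vnorm v ^ 2) := by
    intro u v
    obtain ⟨e1, e2, e3, e4⟩ := aux_svd_eq A U V hU hV S hA τ u v
    rw [e1, e2, e3, e4]
    have := aux_svd_sum hMN σ S hS τ (-(σmax + τ) ^ 2) (-1) (Uᵀ *ᵥ u) (Vᵀ *ᵥ v) (by
      intro j
      generalize (Uᵀ *ᵥ u) (Fin.castLE hMN j) = a
      generalize (Vᵀ *ᵥ v) j = b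
      have y2 : 0 ≤ σ j * τ * (a + b) ^ 2 := mul_nonneg (mul_nonneg (hσ j) hτ0) (sq_nonneg _)
      have y3 : (σ j + τ) ^ 2 * (a ^ 2 + b ^ 2) ≤ (σmax + τ) ^ 2 * (a ^ 2 + b ^ 2) := by
        have := hle j
        have := hσ j
        gcongr
      linarith) (by
      intro x
      have y3 : τ ^ 2 * x ^ 2 ≤ (σmax + τ) ^ 2 * x ^ 2 := by
        have : 0 ≤ σmax := hd0.trans hdσ
        gcongr
        linarith
      linarith)
    linarith
  set P1 := 1 - Ut * Utᵀ with hP1d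
  set P2 := 1 - Vt * Vtᵀ with hP2d
  have hPt : Pᵀ = P := by
    rw [hP, Matrix.fromBlocks_transpose, hP1, hP2]; simp
  have hPP : P * P = P := by
    rw [hP, Matrix.fromBlocks_multiply]; simp [hPP1, hPP2]
  have hBt : Bᵀ = B := by
    rw [hB, Matrix.fromBlocks_transpose]; simp
  have hBx : ∀ x : Fin M ⊕ Fin N → ℝ, B *ᵥ x = Sum.elim (A *ᵥ (x ∘ Sum.inr) - τ • (x ∘ Sum.inl))
      (Aᵀ *ᵥ (x ∘ Sum.inl) - τ • (x ∘ Sum.inr)) := by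
    intro x
    rw [hB, Matrix.fromBlocks_mulVec]
    congr 1
    · rw [Matrix.smul_mulVec, Matrix.one_mulVec, neg_smul]; abel
    · rw [Matrix.smul_mulVec, Matrix.one_mulVec, neg_smul]; abel
  have hBmx : ∀ x, P *ᵥ x = x → Bm *ᵥ x = P *ᵥ (B *ᵥ x) := by
    intro x hx
    rw [hBm, ← Matrix.mulVec_mulVec, hx, ← Matrix.mulVec_mulVec]
  have hxe : ∀ x : Fin M ⊕ Fin N → ℝ, x = Sum.elim (x ∘ Sum.inl) (x ∘ Sum.inr) := fun x => by
    simp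
  have hb0 : dm1 - δ < σmax + τ + δ := by linarith
  have ha0 : 0 < dm1 - δ := by linarith
  have hrate : 1 - 2 / (1 + (σmax + τ + δ) / (dm1 - δ)) =
      (σmax + τ + δ - (dm1 - δ)) / (σmax + τ + δ + (dm1 - δ)) := by
    generalize σmax + τ + δ = b at *
    generalize dm1 - δ = a at *
    have h1 : 0 < b + a := by linarith
    have h2 : 1 + b / a = (b + a) / a := by field_simp; ring
    rw [h2]
    field_simp
    ring
  intro j
  rw [hrate]
  refine aux_minres Bm P ?_ hPt hPP ?_ ?_ _ _ ha0 hb0 ?_ ?_ r hr j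
  · rw [hBm, Matrix.transpose_mul, Matrix.transpose_mul, hPt, hBt, Matrix.mul_assoc]
  · rw [hBm, ← Matrix.mul_assoc, ← Matrix.mul_assoc, hPP]
  · rw [hBm, Matrix.mul_assoc, hPP]
  · intro x hx
    have hx2 := hx
    rw [hP, Matrix.fromBlocks_mulVec] at hx2
    have hu : P1 *ᵥ (x ∘ Sum.inl) = x ∘ Sum.inl := by
      have := congrArg (fun f => f ∘ Sum.inl) hx2
      simpa using this
    have hv : P2 *ᵥ (x ∘ Sum.inr) = x ∘ Sum.inr := by
      have := congrArg (fun f => f ∘ Sum.inr) hx2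
      simpa using this
    have key := aux_perturb A P1 (1 - Um * Umᵀ) P2 (1 - Vm * Vmᵀ) hP1 hPP1 hQ1 hQQ1 hP2 hPP2 hQ2 hQQ2 hcomm
      s t dm1 τ hs0 (by linarith) ht0 (by linarith) hd0 g1 g2 g3 g4 hex _ _ hu hv
    rw [← hδ, ← hxe x] at key
    refine key.trans (le_of_eq ?_)
    rw [hBmx x hx, hBx, hP, Matrix.fromBlocks_mulVec]
    congr 2
    · rw [Sum.elim_comp_inl, Sum.elim_comp_inr, Matrix.zero_mulVec, add_zero, Matrix.mulVec_sub,
        Matrix.mulVec_smul, hu, ← Matrix.mulVec_mulVec, hv, ← Matrix.mulVec_mulVec]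
    · rw [Sum.elim_comp_inl, Sum.elim_comp_inr, Matrix.zero_mulVec, zero_add, Matrix.mulVec_sub,
        Matrix.mulVec_smul, hv, Matrix.transpose_mul, Matrix.transpose_mul, hP1, hP2,
        ← Matrix.mulVec_mulVec, ← Matrix.mulVec_mulVec, hu]
  · intro x hx
    rw [hBmx x hx]
    have h1 := aux_mulVec_le P (B *ᵥ x)
    have h2 := aux_proj_spec P hPt hPP
    have h3 := mul_le_mul_of_nonneg_right h2 (aux_vnorm_nonneg (B *ᵥ x))
    have hσ0 : 0 ≤ σmax := hd0.trans hdσ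
    have h4 : 1 * vnorm (B *ᵥ x) ≤ (σmax + τ) * vnorm x := by
      rw [hBx]
      conv_rhs => rw [hxe x]
      refine aux_le_elim _ _ _ _ _ _ zero_le_one (by linarith) ?_
      have := hup (x ∘ Sum.inl) (x ∘ Sum.inr)
      linarith
    have h5 : 0 ≤ δ * vnorm x := mul_nonneg hδ0 (aux_vnorm_nonneg _)
    linarith
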